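/- For any prime ℓ > 5 not dividing m and any g ≥ 1, PSp_{2g}(ℤ/ℓℤ) ∉ Occ(GSp_{2g}(ℤ/mℤ)). -/

import Mathlib

/-- `MemOcc G S` : the non-abelian simple group `S` occurs among the composition
factors of `G`. -/
def MemOcc (G : Type) [Group G] (S : Type) [Group S] : Prop :=
  IsSimpleGroup S ∧ (∃ a b : S, a * b ≠ b * a) ∧
    ∃ (K : Subgroup G) (f : ↥K →* S), Function.Surjective f

/-- `PSp_{2g}(ℤ/ℓℤ) = Sp_{2g}(ℤ/ℓℤ)/{±I}`, realized as the quotient by the center. -/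
abbrev PSp (g ℓ : ℕ) : Type :=
  ↥(Matrix.symplecticGroup (Fin g) (ZMod ℓ)) ⧸
    Subgroup.center ↥(Matrix.symplecticGroup (Fin g) (ZMod ℓ))


open Matrix

/-- The symplectic similitude group `GSp_{2g}(ℤ/mℤ)`, as a subgroup of
`GL_{2g}(ℤ/mℤ)`: matrices preserving the standard symplectic form `J` up to a
unit scalar. -/
def GSp (g m : ℕ) : Subgroup (GL (Fin g ⊕ Fin g) (ZMod m)) where
  carrier := {A | ∃ u : (ZMod m)ˣ,
    (A : Matrix (Fin g ⊕ Fin g) (Fin g ⊕ Fin g) (ZMod m)) * Matrix.J (Fin g) (ZMod m) *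
        (A : Matrix (Fin g ⊕ Fin g) (Fin g ⊕ Fin g) (ZMod m))ᵀ =
      (u : ZMod m) • Matrix.J (Fin g) (ZMod m)}
  one_mem' := ⟨1, by simp⟩
  mul_mem' := by
    rintro a b ⟨u, hu⟩ ⟨v, hv⟩
    refine ⟨u * v, ?_⟩
    have hab : ((a * b : GL (Fin g ⊕ Fin g) (ZMod m)) :
        Matrix (Fin g ⊕ Fin g) (Fin g ⊕ Fin g) (ZMod m)) =
        (a : Matrix _ _ _) * (b : Matrix _ _ _) := rfl
    rw [hab, transpose_mul, show (a : Matrix _ _ _) * (b : Matrix _ _ _) * Matrix.J (Fin g) (ZMod m) *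
      ((b : Matrix _ _ _)ᵀ * (a : Matrix _ _ _)ᵀ) =
      (a : Matrix _ _ _) * ((b : Matrix _ _ _) * Matrix.J (Fin g) (ZMod m) * (b : Matrix _ _ _)ᵀ) *
        (a : Matrix _ _ _)ᵀ by simp only [Matrix.mul_assoc], hv,
      Matrix.mul_smul, Matrix.smul_mul, hu, smul_smul, Units.val_mul]
    ring_nf
  inv_mem' := by
    rintro a ⟨u, hu⟩
    refine ⟨u⁻¹, ?_⟩
    set M := Matrix (Fin g ⊕ Fin g) (Fin g ⊕ Fin g) (ZMod m)
    have hdet : IsUnit ((a : M).det) := (Matrix.isUnit_iff_isUnit_det _).mp a.isUnit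
    have h1 : ((a⁻¹ : GL (Fin g ⊕ Fin g) (ZMod m)) : M) = (a : M)⁻¹ := by
      simp [Matrix.coe_units_inv]
    have h2 : (a : M)⁻¹ * ((a : M) * Matrix.J (Fin g) (ZMod m) * (a : M)ᵀ) * ((a : M)ᵀ)⁻¹ =
        Matrix.J (Fin g) (ZMod m) := by
      rw [show (a : M)⁻¹ * ((a : M) * Matrix.J (Fin g) (ZMod m) * (a : M)ᵀ) * ((a : M)ᵀ)⁻¹ =
          ((a : M)⁻¹ * (a : M)) * Matrix.J (Fin g) (ZMod m) * ((a : M)ᵀ * ((a : M)ᵀ)⁻¹) by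
            simp only [Matrix.mul_assoc],
        Matrix.nonsing_inv_mul _ hdet,
        Matrix.mul_nonsing_inv _ (by rwa [Matrix.det_transpose]),
        Matrix.one_mul, Matrix.mul_one]
    rw [hu] at h2
    have h3 : (u : ZMod m) • ((a : M)⁻¹ * Matrix.J (Fin g) (ZMod m) * ((a : M)ᵀ)⁻¹) =
        Matrix.J (Fin g) (ZMod m) := by
      rw [Matrix.mul_smul, Matrix.smul_mul] at h2
      exact h2
    have h4 := congrArg (fun X : M => ((u⁻¹ : (ZMod m)ˣ) : ZMod m) • X) h3
    simp only [smul_smul] at h4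
    rw [h1, Matrix.transpose_nonsing_inv]
    rw [show ((u⁻¹ : (ZMod m)ˣ) : ZMod m) * (u : ZMod m) = 1 by
      rw [← Units.val_mul, inv_mul_cancel, Units.val_one], one_smul] at h4
    exact h4

theorem one_add_pow_of_sq_eq_zero {R : Type*} [Ring R] {a : R} (ha : a * a = 0) (N : ℕ) :
    (1 + a) ^ N = 1 + (N : R) * a := by
  induction N with
  | zero => simp
  | succ N ih =>
    rw [pow_succ, ih, Nat.cast_succ]
    simp only [mul_add, add_mul, mul_one, one_mul, mul_assoc, ha, mul_zero, add_zero, add_assoc]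

/-- A unipotent element of order two in the nilpotency filtration, of finite order invertible in
the ground field, is trivial. -/
theorem eq_one_of_sub_one_sq_eq_zero {k R : Type*} [Field k] [Ring R] [Algebra k R] {T : R}
    (h : (T - 1) * (T - 1) = 0) {N : ℕ} (hN : (N : k) ≠ 0) (hT : T ^ N = 1) : T = 1 := by
  have h1 := one_add_pow_of_sq_eq_zero h N
  rw [add_sub_cancel, hT, left_eq_add] at h1
  have h2 : (N : k) • (T - 1) = 0 := by
    rw [Algebra.smul_def, map_natCast, h1]
  exact sub_eq_zero.mp ((smul_eq_zero.mp h2).resolve_left hN)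

open Module in
theorem finrank_eq_sum_of_iSupIndep {k V ι : Type*} [Field k] [AddCommGroup V] [Module k V]
    [FiniteDimensional k V] [Fintype ι] {W : ι → Submodule k V} (hW : iSupIndep W)
    (htop : ⨆ i, W i = ⊤) : finrank k V = ∑ i, finrank k (W i) := by
  classical
  have h := DirectSum.isInternal_submodule_of_iSupIndep_of_iSup_eq_top hW htop
  rw [← finrank_directSum]
  exact (LinearEquiv.ofBijective (DirectSum.coeLinearMap W) h).finrank_eq.symm

theorem IsPGroup.natCast_card_ne_zero {k P : Type*} [Field k] [Group P] [Finite P] {ℓ : ℕ}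
    [Fact ℓ.Prime] (hP : IsPGroup ℓ P) (hk : (ℓ : k) ≠ 0) : (Nat.card P : k) ≠ 0 := by
  obtain ⟨n, hn⟩ := IsPGroup.iff_card.mp hP
  rw [hn, Nat.cast_pow]
  exact pow_ne_zero _ hk

theorem pow_pow_pred_mul_le (ℓ c : ℕ) (hℓ : 1 ≤ ℓ) : (ℓ ^ c) ^ (ℓ - 1) * ℓ ≤ ℓ ^ (ℓ ^ c) := by
  rw [← pow_mul, ← pow_succ]
  refine Nat.pow_le_pow_right hℓ ?_
  obtain ⟨m, rfl⟩ := Nat.exists_eq_add_of_le hℓ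
  rw [Nat.add_sub_cancel_left]
  induction c with
  | zero => simp
  | succ c ih =>
    rw [pow_succ]
    nlinarith [Nat.zero_le (c * m * m)]

open Module in
/-- A finite `ℓ`-group acting on an `n`-dimensional space in characteristic different from `ℓ` has
a subgroup of small index which acts through commuting operators. -/
theorem exists_commuting_subgroup {k : Type} [Field k] [IsAlgClosed k] {ℓ : ℕ} [Fact ℓ.Prime]
    (hk : (ℓ : k) ≠ 0) (n : ℕ) (hn : 0 < n) : ∀ (P : Type) [Group P] [Finite P] (_ : IsPGroup ℓ P)
    (V : Type) [AddCommGroup V] [Module k V] [FiniteDimensional k V] (ρ : Representation k P V)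
    (_ : finrank k V = n), ∃ A : Subgroup P, (∀ a ∈ A, ∀ b ∈ A, Commute (ρ a) (ρ b)) ∧
      A.index ^ (ℓ - 1) * ℓ ≤ ℓ ^ n := by
  have hℓ : ℓ.Prime := Fact.out
  induction n using Nat.strong_induction_on with
  | _ n ih =>
  intro P _ _ hP V _ _ _ ρ hV
  have hinv : ∀ p v, ρ p⁻¹ (ρ p v) = v := fun p v => by simp
  by_cases hirr : ∃ W : Submodule k V, (∀ g, W ≤ W.comap (ρ g)) ∧ W ≠ ⊥ ∧ W ≠ ⊤
  · obtain ⟨W, hW, hbot, htop⟩ := hirr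
    have hsum := Submodule.finrank_quotient_add_finrank W
    have hlt := Submodule.finrank_lt htop
    have hpos : 0 < finrank k W := by
      rw [Nat.pos_iff_ne_zero]
      exact fun h => hbot (Submodule.finrank_eq_zero.mp h)
    obtain ⟨A, hA, hAi⟩ := ih (finrank k W) (by omega) hpos P hP W (ρ.subrepresentation W hW) rfl
    obtain ⟨B, hB, hBi⟩ := ih (finrank k (V ⧸ W)) (by omega) (by omega) P hP (V ⧸ W)
      (ρ.quotient W hW) rfl
    refine ⟨A ⊓ B, ?_, ?_⟩
    · intro a ha b hb
      have hfix : ∀ w ∈ W, ρ (a * b) w = ρ (b * a) w := by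
        intro w hw
        have := congrArg Subtype.val (LinearMap.congr_fun (hA a ha.1 b hb.1) ⟨w, hw⟩)
        simpa using this
      have hmod : ∀ v, ρ (a * b) v - ρ (b * a) v ∈ W := by
        intro v
        have := LinearMap.congr_fun (hB a ha.2 b hb.2) (Submodule.Quotient.mk v)
        rw [← Submodule.Quotient.eq W]
        simpa using this
      have hc : ρ ((b * a)⁻¹ * (a * b)) = 1 := by
        refine eq_one_of_sub_one_sq_eq_zero (k := k) ?_ (hP.natCast_card_ne_zero hk) ?_
        · ext v
          have h1 : ρ ((b * a)⁻¹ * (a * b)) v - v ∈ W := by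
            have := hW (b * a)⁻¹ (hmod v)
            rw [Submodule.mem_comap, map_sub, hinv] at this
            rwa [map_mul, Module.End.mul_apply]
          have h2 : ρ ((b * a)⁻¹ * (a * b)) (ρ ((b * a)⁻¹ * (a * b)) v - v) =
              ρ ((b * a)⁻¹ * (a * b)) v - v := by
            rw [map_mul, Module.End.mul_apply] at h1 ⊢
            rw [Module.End.mul_apply, hfix _ h1, hinv]
          rw [Module.End.mul_apply, LinearMap.sub_apply, LinearMap.sub_apply, Module.End.one_apply,
            Module.End.one_apply, h2, sub_self, LinearMap.zero_apply]
        · rw [← map_pow, pow_card_eq_one', map_one]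
      have h3 : ρ (a * b) = ρ (b * a) := by
        have := congrArg (ρ (b * a) * ·) hc
        simpa [← map_mul, mul_assoc] using this
      simpa [Commute, SemiconjBy] using h3
    · have hle := Subgroup.index_inf_le (H := A) (K := B)
      refine Nat.le_of_mul_le_mul_right ?_ hℓ.pos
      calc (A ⊓ B).index ^ (ℓ - 1) * ℓ * ℓ ≤ (A.index * B.index) ^ (ℓ - 1) * ℓ * ℓ := by gcongr
        _ = (A.index ^ (ℓ - 1) * ℓ) * (B.index ^ (ℓ - 1) * ℓ) := by rw [mul_pow]; ring
        _ ≤ ℓ ^ (finrank k W) * ℓ ^ (finrank k (V ⧸ W)) := by gcongr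
        _ = ℓ ^ n := by rw [← pow_add]; congr 1; omega
        _ ≤ ℓ ^ n * ℓ := Nat.le_mul_of_pos_right _ hℓ.pos
  · push Not at hirr
    have hnt : Nontrivial V := Module.nontrivial_of_finrank_pos (R := k) (by omega)
    let C : Subgroup P :=
      { carrier := {p | ∀ y, Commute (ρ p) (ρ y)}
        one_mem' := fun y => by simp
        mul_mem' := fun {a b} ha hb y => by
          rw [map_mul]; exact (ha y).mul_left (hb y)
        inv_mem' := fun {a} ha y => by
          have h : ρ (a⁻¹ * y) = ρ (y * a⁻¹) := by
            have h1 : ρ (a⁻¹ * (a * y) * a⁻¹) = ρ (a⁻¹ * (y * a) * a⁻¹) := by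
              simp only [map_mul _ _ a⁻¹, map_mul _ a⁻¹]
              rw [map_mul, map_mul, (ha y).eq]
            simpa [mul_assoc] using h1.symm
          simpa [Commute, SemiconjBy] using h }
    have hC : C.Normal := by
      refine ⟨fun p hp g => ?_⟩
      have h : ρ (g * p * g⁻¹) = ρ p := by
        rw [map_mul, map_mul, ← (hp g).eq, mul_assoc, ← map_mul, mul_inv_cancel, map_one, mul_one]
      intro y
      rw [h]
      exact hp y
    have hscal : ∀ p ∈ C, ∃ μ : k, ρ p = μ • 1 := by
      intro p hp
      obtain ⟨μ, hμ⟩ := Module.End.exists_eigenvalue (ρ p)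
      refine ⟨μ, ?_⟩
      have := hirr (Module.End.eigenspace (ρ p) μ) ?_ hμ
      · ext v
        have hv : v ∈ Module.End.eigenspace (ρ p) μ := by rw [this]; trivial
        simpa using Module.End.mem_eigenspace_iff.mp hv
      · intro g v hv
        rw [Submodule.mem_comap, Module.End.mem_eigenspace_iff, ← Module.End.mul_apply, (hp g).eq,
          Module.End.mul_apply, Module.End.mem_eigenspace_iff.mp hv, map_smul]
    by_cases hCtop : C = ⊤
    · refine ⟨⊤, fun a _ b _ => (hCtop ▸ Subgroup.mem_top a : a ∈ C) b, ?_⟩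
      simpa using Nat.le_self_pow hn.ne' ℓ
    have : Nontrivial (P ⧸ C) := QuotientGroup.nontrivial_iff.mpr hCtop
    have hcen := (hP.to_quotient C).center_nontrivial
    obtain ⟨⟨x', hx'⟩, hne⟩ := exists_ne (1 : Subgroup.center (P ⧸ C))
    obtain ⟨x, rfl⟩ := QuotientGroup.mk_surjective x'
    have hxC : x ∉ C := fun h => hne (Subtype.ext ((QuotientGroup.eq_one_iff x).mpr h))
    have hcomm : ∀ y, (y * x)⁻¹ * (x * y) ∈ C := by
      intro y
      rw [← QuotientGroup.eq]
      exact (Subgroup.mem_center_iff.mp hx' (QuotientGroup.mk y))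
    have hχ : ∀ y, ∃ μ : k, ∀ v, ρ x (ρ y v) = μ • ρ y (ρ x v) := by
      intro y
      obtain ⟨μ, hμ⟩ := hscal _ (hcomm y)
      refine ⟨μ, fun v => ?_⟩
      have := congrArg (ρ (y * x)) (LinearMap.congr_fun hμ v)
      simpa [← Module.End.mul_apply, ← map_mul, mul_assoc] using this
    choose χ₀ hχ₀ using hχ
    obtain ⟨v₀, hv₀⟩ := exists_ne (0 : V)
    have hρne : ∀ y v, v ≠ 0 → ρ y v ≠ 0 := by
      intro y v hv h
      apply hv
      rw [← hinv y v, h, map_zero]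
    let χ₁ : P →* k :=
      { toFun := χ₀
        map_one' := by
          have := hχ₀ 1 v₀
          simp only [map_one, Module.End.one_apply] at this
          exact (smul_left_injective k (hρne x v₀ hv₀) (by simpa using this)).symm
        map_mul' := fun y z => by
          have h1 := hχ₀ (y * z) v₀
          rw [map_mul, Module.End.mul_apply, Module.End.mul_apply, hχ₀ y, hχ₀ z, map_smul,
            smul_smul] at h1
          exact (smul_left_injective k (hρne y _ (hρne z _ (hρne x _ hv₀))) h1).symm }
    let χ : P →* kˣ := χ₁.toHomUnits
    have hχ : ∀ y v, ρ x (ρ y v) = (χ y : k) • ρ y (ρ x v) := hχ₀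
    obtain ⟨μ, hμ⟩ := Module.End.exists_eigenvalue (ρ x)
    have hμ0 : μ ≠ 0 := by
      rintro rfl
      obtain ⟨v, hv⟩ := hμ.exists_hasEigenvector
      exact hρne x v hv.2 (by simpa using hv.apply_eq_smul)
    let W : χ.range → Submodule k V := fun s => Module.End.eigenspace (ρ x) ((s : kˣ) * μ)
    have hmap : ∀ y s v, v ∈ W s → ρ y v ∈ W (χ.rangeRestrict y * s) := by
      intro y s v hv
      have hv' := Module.End.mem_eigenspace_iff.mp hv
      rw [Module.End.mem_eigenspace_iff, hχ, hv', map_smul, smul_smul]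
      simp [mul_assoc]
    have hWind : iSupIndep W := by
      refine (Module.End.eigenspaces_iSupIndep (ρ x)).comp (f := fun s : χ.range => (s : kˣ) * μ) ?_
      intro s t hst
      exact Subtype.ext (Units.ext (mul_right_cancel₀ hμ0 hst))
    have hW1 : W 1 ≠ ⊥ := by
      have h : Module.End.eigenspace (ρ x) μ ≠ ⊥ := hμ
      simpa only [W, OneMemClass.coe_one, Units.val_one, one_mul] using h
    have hWne : ∀ s, W s ≠ ⊥ := by
      rintro ⟨_, y, rfl⟩
      obtain ⟨v, hv, hv0⟩ := Submodule.exists_mem_ne_zero_of_ne_bot hW1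
      refine (Submodule.ne_bot_iff _).mpr ⟨ρ y v, ?_, hρne y v hv0⟩
      have h := hmap y 1 v hv
      rwa [mul_one] at h
    have hWtop : ∀ s, W s ≠ ⊤ := by
      intro s hs
      apply hxC
      have hsc : ρ x = ((s : kˣ) * μ : k) • 1 := by
        ext v
        have hv : v ∈ W s := by rw [hs]; trivial
        simpa using Module.End.mem_eigenspace_iff.mp hv
      intro y
      rw [hsc]
      exact (Commute.one_left _).smul_left _
    have hWsup : ⨆ s, W s = ⊤ := by
      refine hirr _ (fun y => ?_) (ne_bot_of_le_ne_bot hW1 (le_iSup W 1))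
      refine iSup_le fun s v hv => ?_
      exact le_iSup W _ (hmap y s v hv)
    have hpres : ∀ s, ∀ p : χ.ker, W s ≤ (W s).comap ((ρ.comp χ.ker.subtype) p) := by
      intro s p v hv
      have h := hmap p s v hv
      have h1 : χ.rangeRestrict p = 1 := Subtype.ext p.2
      rwa [h1, one_mul] at h
    have hfin : ∀ s, 0 < finrank k (W s) := fun s =>
      Nat.pos_of_ne_zero fun h => hWne s (Submodule.finrank_eq_zero.mp h)
    have hA := fun s => ih (finrank k (W s)) (hV ▸ Submodule.finrank_lt (hWtop s)) (hfin s) χ.ker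
      (hP.to_subgroup _) (W s)
      (Representation.subrepresentation (ρ.comp χ.ker.subtype) (W s) (hpres s)) rfl
    choose A hA hAi using hA
    have : Finite χ.range := Finite.of_surjective _ χ.rangeRestrict_surjective
    have : Fintype χ.range := Fintype.ofFinite _
    refine ⟨(⨅ s, A s).map χ.ker.subtype, ?_, ?_⟩
    · rintro _ ⟨a, ha, rfl⟩ _ ⟨b, hb, rfl⟩
      have hle : (⊤ : Submodule k V) ≤ LinearMap.eqLocus (ρ a * ρ b) (ρ b * ρ a) := by
        rw [← hWsup]
        refine iSup_le fun s v hv => ?_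
        have ha' := (Subgroup.mem_iInf.mp ha) s
        have hb' := (Subgroup.mem_iInf.mp hb) s
        exact congrArg Subtype.val (LinearMap.congr_fun (hA s a ha' b hb') ⟨v, hv⟩)
      exact LinearMap.ext fun v => hle (Submodule.mem_top (x := v))
    · rw [Subgroup.index_map_subtype, Subgroup.index_ker]
      obtain ⟨c, hc⟩ := IsPGroup.iff_card.mp (hP.of_surjective χ.rangeRestrict
        χ.rangeRestrict_surjective)
      have hle := Subgroup.index_iInf_le A
      have hcard : Fintype.card χ.range = ℓ ^ c := by rw [← Nat.card_eq_fintype_card, hc]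
      have hprod : (∏ s, (A s).index) ^ (ℓ - 1) * ℓ ^ (ℓ ^ c) ≤ ℓ ^ n := by
        rw [← hV, finrank_eq_sum_of_iSupIndep hWind hWsup, ← Finset.prod_pow_eq_pow_sum,
          ← Finset.prod_pow, ← hcard, ← Finset.card_univ, ← Finset.prod_const,
          ← Finset.prod_mul_distrib]
        exact Finset.prod_le_prod' fun s _ => hAi s
      rw [hc]
      calc ((⨅ s, A s).index * ℓ ^ c) ^ (ℓ - 1) * ℓ
          ≤ ((∏ s, (A s).index) * ℓ ^ c) ^ (ℓ - 1) * ℓ := by gcongr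
        _ = (∏ s, (A s).index) ^ (ℓ - 1) * ((ℓ ^ c) ^ (ℓ - 1) * ℓ) := by rw [mul_pow]; ring
        _ ≤ (∏ s, (A s).index) ^ (ℓ - 1) * ℓ ^ (ℓ ^ c) := by
          gcongr; exact pow_pow_pred_mul_le ℓ c hℓ.one_le
        _ ≤ ℓ ^ n := hprod

open Module in
/-- In dimension two, an operator of finite order commuting with one of its conjugates either
equals it or is inverse to it up to a scalar. -/
theorem eq_or_mul_eq_smul_one_of_conj {k V : Type*} [Field k] [IsAlgClosed k] [AddCommGroup V]
    [Module k V] (hV : finrank k V = 2) {X Y A A' : End k V} (hXY : Commute X Y)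
    (hA : A * X = Y * A) (hAA' : A * A' = 1) (hA'A : A' * A = 1) {N : ℕ} (hN : (N : k) ≠ 0)
    (hX : X ^ N = 1) : Y = X ∨ ∃ c : k, X * Y = c • 1 := by
  have hfd : FiniteDimensional k V := FiniteDimensional.of_finrank_pos (by omega)
  have hnt : Nontrivial V := nontrivial_of_finrank_pos (R := k) (by omega)
  by_cases hsc : ∃ α : k, X = α • 1
  · left
    obtain ⟨α, rfl⟩ := hsc
    calc Y = Y * A * A' := by rw [mul_assoc, hAA', mul_one]
      _ = α • 1 := by rw [← hA, mul_smul_comm, mul_one, smul_mul_assoc, hAA']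
  have hss : X.IsSemisimple := by
    refine End.isSemisimple_of_squarefree_aeval_eq_zero
      (Polynomial.X_pow_sub_one_separable_iff.mpr hN).squarefree ?_
    simp [hX]
  have htop := hss.iSup_eigenspace_eq_top
  obtain ⟨α, hα⟩ := End.exists_eigenvalue X
  obtain ⟨v, hv⟩ := hα.exists_hasEigenvector
  have hβ : ∃ β, β ≠ α ∧ X.HasEigenvalue β := by
    by_contra! h
    apply hsc
    refine ⟨α, LinearMap.ext fun u => ?_⟩
    have hu : u ∈ X.eigenspace α := by
      have hle : (⊤ : Submodule k V) ≤ X.eigenspace α := by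
        rw [← htop]
        refine iSup_le fun β => ?_
        rcases eq_or_ne β α with rfl | hβ
        · exact le_rfl
        · have : X.eigenspace β = ⊥ := not_not.mp (h β hβ)
          rw [this]
          exact bot_le
      exact hle trivial
    simpa using End.mem_eigenspace_iff.mp hu
  obtain ⟨β, hβα, hβ⟩ := hβ
  obtain ⟨w, hw⟩ := hβ.exists_hasEigenvector
  have hXv := hv.apply_eq_smul
  have hXw := hw.apply_eq_smul
  have hind : ∀ a b : k, a • v + b • w = 0 → a = 0 ∧ b = 0 := by
    intro a b h
    have h1 : (a * α) • v + (b * β) • w = 0 := by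
      have := congrArg X h
      simpa [hXv, hXw, smul_smul] using this
    have h2 : (b * (β - α)) • w = 0 := by
      have h3 : (b * (β - α)) • w = ((a * α) • v + (b * β) • w) - α • (a • v + b • w) := by
        module
      rw [h3, h, h1, smul_zero, sub_zero]
    have hb : b = 0 :=
      (mul_eq_zero.mp ((smul_eq_zero.mp h2).resolve_right hw.2)).resolve_right (sub_ne_zero.mpr hβα)
    refine ⟨?_, hb⟩
    rw [hb, zero_smul, add_zero] at h
    exact (smul_eq_zero.mp h).resolve_right hv.2
  have hli : LinearIndependent k ![v, w] := LinearIndependent.pair_iff.mpr hind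
  have hspan : ∀ u : V, ∃ a b : k, a • v + b • w = u := by
    intro u
    have h : u ∈ Submodule.span k (Set.range ![v, w]) := by
      rw [hli.span_eq_top_of_card_eq_finrank (by simp [hV])]
      trivial
    rw [Matrix.range_cons, Matrix.range_cons, Matrix.range_empty, Set.union_empty] at h
    exact Submodule.mem_span_pair.mp h
  have hext : ∀ S T : End k V, S v = T v → S w = T w → S = T := by
    intro S T h1 h2
    ext u
    obtain ⟨a, b, rfl⟩ := hspan u
    simp [h1, h2]
  have heig : ∀ (γ a b : k), X (a • v + b • w) = γ • (a • v + b • w) →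
      a * (α - γ) = 0 ∧ b * (β - γ) = 0 := by
    intro γ a b h
    apply hind
    rw [map_add, map_smul, map_smul, hXv, hXw, ← sub_eq_zero] at h
    rw [← h]
    module
  have hYv : ∃ γ : k, Y v = γ • v := by
    obtain ⟨a, b, hab⟩ := hspan (Y v)
    have h := heig α a b (by
      rw [hab, ← End.mul_apply, hXY.eq, End.mul_apply, hXv, map_smul])
    have hb := (mul_eq_zero.mp h.2).resolve_right (sub_ne_zero.mpr hβα)
    exact ⟨a, by rw [← hab, hb]; simp⟩
  have hYw : ∃ δ : k, Y w = δ • w := by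
    obtain ⟨a, b, hab⟩ := hspan (Y w)
    have h := heig β a b (by
      rw [hab, ← End.mul_apply, hXY.eq, End.mul_apply, hXw, map_smul])
    have ha := (mul_eq_zero.mp h.1).resolve_right (sub_ne_zero.mpr hβα.symm)
    exact ⟨b, by rw [← hab, ha]; simp⟩
  have hXA' : X * A' = A' * Y := by
    calc X * A' = A' * A * X * A' := by rw [hA'A, one_mul]
      _ = A' * Y := by rw [mul_assoc A', hA, mul_assoc, mul_assoc, hAA', mul_one]
  have hev : ∀ (γ : k) (u : V), u ≠ 0 → Y u = γ • u → γ = α ∨ γ = β := by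
    intro γ u hu hYu
    obtain ⟨a, b, hab⟩ := hspan (A' u)
    have h := heig γ a b (by
      rw [hab, ← End.mul_apply, hXA', End.mul_apply, hYu, map_smul])
    by_contra! hne
    have ha := (mul_eq_zero.mp h.1).resolve_right (sub_ne_zero.mpr hne.1.symm)
    have hb := (mul_eq_zero.mp h.2).resolve_right (sub_ne_zero.mpr hne.2.symm)
    apply hu
    rw [← End.one_apply (R := k) u, ← hAA', End.mul_apply, ← hab, ha, hb]
    simp
  obtain ⟨γ, hγ⟩ := hYv
  obtain ⟨δ, hδ⟩ := hYw
  have hγδ : γ ≠ δ := by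
    rintro rfl
    apply hsc
    have hY : Y = γ • 1 := hext _ _ (by simpa using hγ) (by simpa using hδ)
    refine ⟨γ, ?_⟩
    calc X = A' * (A * X) := by rw [← mul_assoc, hA'A, one_mul]
      _ = γ • 1 := by rw [hA, hY, smul_mul_assoc, one_mul, mul_smul_comm, hA'A]
  rcases hev γ v hv.2 hγ with rfl | rfl
  · rcases hev δ w hw.2 hδ with rfl | rfl
    · exact absurd rfl hγδ
    · exact Or.inl (hext _ _ (hγ.trans hXv.symm) (hδ.trans hXw.symm))
  · rcases hev δ w hw.2 hδ with rfl | rfl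
    · refine Or.inr ⟨δ * γ, hext _ _ ?_ ?_⟩
      · simp [hγ, hXv, smul_smul, mul_comm]
      · simp [hδ, hXw, smul_smul]
    · exact absurd rfl hγδ

open Module in
/-- If a finite linear group surjects onto `S`, every `ℓ`-subgroup of `S` has a commutative subgroup
of small index. -/
theorem exists_commutative_subgroup_of_surjective {k : Type} [Field k] [IsAlgClosed k] {ℓ : ℕ}
    [Fact ℓ.Prime] (hk : (ℓ : k) ≠ 0) {K S V : Type} [Group K] [Finite K] [Group S]
    [AddCommGroup V] [Module k V] (hV : 0 < finrank k V) (ρ : Representation k K V) {f : K →* S}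
    (hf : Function.Surjective f) (hρ : ∀ x, ρ x = 1 → f x = 1) {E : Subgroup S}
    (hE : IsPGroup ℓ E) : ∃ B : Subgroup E, (∀ a ∈ B, ∀ b ∈ B, a * b = b * a) ∧
      B.index ^ (ℓ - 1) * ℓ ≤ ℓ ^ finrank k V := by
  have hfd : FiniteDimensional k V := FiniteDimensional.of_finrank_pos hV
  have hf' := f.subgroupComap_surjective_of_surjective E hf
  have : Finite E := Finite.of_surjective _ hf'
  let P : Sylow ℓ (E.comap f) := default
  have hP : (P : Subgroup (E.comap f)).map (f.subgroupComap E) = ⊤ := by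
    have h := (P.mapSurjective hf').is_maximal' (Q := ⊤)
      (hE.of_equiv Subgroup.topEquiv.symm) le_top
    exact h.symm
  let φ : P →* E := (f.subgroupComap E).comp (P : Subgroup (E.comap f)).subtype
  have hφ : Function.Surjective φ := by
    intro e
    obtain ⟨x, hx, rfl⟩ := (hP ▸ Subgroup.mem_top e : e ∈ Subgroup.map _ _)
    exact ⟨⟨x, hx⟩, rfl⟩
  obtain ⟨A, hA, hAi⟩ := exists_commuting_subgroup hk _ hV P P.2 V
    ((ρ.comp (E.comap f).subtype).comp (P : Subgroup (E.comap f)).subtype) rfl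
  refine ⟨A.map φ, ?_, ?_⟩
  · rintro _ ⟨a, ha, rfl⟩ _ ⟨b, hb, rfl⟩
    have h1 : ρ (a.1.1 * b.1.1) = ρ (b.1.1 * a.1.1) := by
      rw [map_mul, map_mul]
      exact hA a ha b hb
    have h2 := hρ ((b.1.1 * a.1.1)⁻¹ * (a.1.1 * b.1.1)) (by
      rw [map_mul, h1, ← map_mul, inv_mul_cancel, map_one])
    rw [map_mul, map_inv, inv_mul_eq_one, map_mul, map_mul] at h2
    exact Subtype.ext h2.symm
  · have hle := Nat.le_of_dvd (Nat.pos_of_ne_zero A.index_ne_zero_of_finite)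
      (A.index_map_dvd hφ)
    refine le_trans ?_ hAi
    gcongr

open Module in
theorem pow_fifteen_eq_one_of_conj_eq_pow_four_of_normal {k : Type} [Field k] [IsAlgClosed k] {ℓ : ℕ}
    [Fact ℓ.Prime] (hℓ : 2 < ℓ) (hk : (ℓ : k) ≠ 0) {K S V : Type} [Group K] [Finite K] [Group S]
    [AddCommGroup V] [Module k V] (hV : finrank k V = 2) (ρ : Representation k K V) {f : K →* S}
    (hf : Function.Surjective f) (hρ : ∀ x, ρ x = 1 → f x = 1) {u t : S}
    [(Subgroup.zpowers u).Normal] (hu : u ^ ℓ = 1) (ht : t * u * t⁻¹ = u ^ 4) :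
    u ^ 15 = 1 ∨ u ^ 3 = 1 := by
  have hfd : FiniteDimensional k V := FiniteDimensional.of_finrank_pos (by omega)
  have hU : IsPGroup ℓ (Subgroup.zpowers u) := by
    rintro ⟨_, j, rfl⟩
    refine ⟨1, Subtype.ext ?_⟩
    simp only [pow_one, Subgroup.coe_pow, Subgroup.coe_one]
    rw [← zpow_natCast, ← _root_.zpow_mul, mul_comm, _root_.zpow_mul, zpow_natCast, hu, _root_.one_zpow]
  let N := (Subgroup.zpowers u).comap f
  have hf' := f.subgroupComap_surjective_of_surjective (Subgroup.zpowers u) hf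
  have hfin : Finite (Subgroup.zpowers u) := Finite.of_surjective _ hf'
  let P : Sylow ℓ N := default
  have hP : (P : Subgroup N).map (f.subgroupComap (Subgroup.zpowers u)) = ⊤ :=
    ((P.mapSurjective hf').is_maximal' (Q := ⊤)
      (hU.of_equiv Subgroup.topEquiv.symm) le_top).symm
  obtain ⟨A, hA, hAi⟩ := exists_commuting_subgroup hk _ (by omega) P P.2 V
    ((ρ.comp N.subtype).comp (P : Subgroup N).subtype) hV
  have hAtop : A = ⊤ := by
    rw [← Subgroup.index_eq_one]
    by_contra hne
    have h2 : 2 ≤ A.index := by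
      have := A.index_ne_zero_of_finite
      omega
    have hlt : ℓ < 2 ^ (ℓ - 1) := by
      obtain ⟨m, rfl⟩ := Nat.exists_eq_add_of_le hℓ
      have := Nat.lt_two_pow_self (n := m + 1)
      rw [show 2 + 1 + m - 1 = m + 1 + 1 by omega, pow_succ]
      omega
    have h3 : 2 ^ (ℓ - 1) ≤ A.index ^ (ℓ - 1) := by gcongr
    nlinarith
  subst hAtop
  obtain ⟨x, hxP, hx⟩ : (⟨u, Subgroup.mem_zpowers u⟩ : Subgroup.zpowers u) ∈
      (P : Subgroup N).map (f.subgroupComap (Subgroup.zpowers u)) := by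
    rw [hP]
    trivial
  have hfx : f x = u := congrArg Subtype.val hx
  obtain ⟨τ, rfl⟩ := hf t
  have hτ : τ ∈ Subgroup.normalizer ((P : Subgroup N).map N.subtype : Set K) ⊔ N := by
    rw [P.normalizer_sup_eq_top]
    trivial
  obtain ⟨a, ha, n, hn, rfl⟩ := Subgroup.mem_sup_of_normal_right.mp hτ
  obtain ⟨j, hj⟩ : ∃ j : ℤ, u ^ j = f n := hn
  have hfa : f a * u * (f a)⁻¹ = u ^ 4 := by
    rw [← ht, map_mul, ← hj]
    group
  obtain ⟨y, hyP, hy⟩ : a * x * a⁻¹ ∈ (P : Subgroup N).map N.subtype :=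
    (Subgroup.mem_normalizer_iff.mp ha x).mp ⟨x, hxP, rfl⟩
  have hy' : (y : K) = a * x * a⁻¹ := hy
  have hfy : f y = u ^ 4 := by rw [hy', map_mul, map_mul, map_inv, hfx, hfa]
  have hcomm : Commute (ρ x) (ρ y) := hA ⟨x, hxP⟩ trivial ⟨y, hyP⟩ trivial
  have hxN : (ρ (x : K)) ^ Nat.card P = 1 := by
    have : (⟨x, hxP⟩ : P) ^ Nat.card P = 1 := pow_card_eq_one'
    have h2 : (x : K) ^ Nat.card P = 1 := congrArg (fun z : P => (z : K)) this
    rw [← map_pow, h2, map_one]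
  rcases eq_or_mul_eq_smul_one_of_conj hV hcomm (A := ρ a) (A' := ρ a⁻¹)
    (by rw [← map_mul, ← map_mul, hy']; simp) (by simp [← map_mul]) (by simp [← map_mul])
    (P.2.natCast_card_ne_zero hk) hxN with h | ⟨c, hc⟩
  · right
    have h1 := hρ ((x : K)⁻¹ * y) (by rw [map_mul, h, ← map_mul, inv_mul_cancel, map_one])
    rw [map_mul, map_inv, hfx, hfy] at h1
    rw [← h1]
    group
  · left
    have h1 : ρ ((x * y : K)⁻¹ * (a * (x * y) * a⁻¹)) = 1 := by
      have h2 : ρ (a * (x * y) * a⁻¹) = ρ (x * y) := by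
        rw [map_mul, map_mul, map_mul _ (x : K), hc, mul_smul_comm, mul_one, smul_mul_assoc,
          ← map_mul, mul_inv_cancel, map_one]
      rw [map_mul, h2, ← map_mul, inv_mul_cancel, map_one]
    have h2 := hρ _ h1
    simp only [map_mul, map_inv, hfx, hfy] at h2
    have h3 : f a * (u * u ^ 4) * (f a)⁻¹ = (u ^ 4) ^ 5 := by
      rw [← pow_succ', ← hfa, conj_pow]
    rw [h3] at h2
    rw [← h2]
    group

open Module in
/-- A finite linear group of degree two over an algebraically closed field of characteristic
different from `ℓ` does not surject onto a group in which an element of order `ℓ > 5` is conjugate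
to its fourth power. -/
theorem not_surjective_of_conj_eq_pow_four {k : Type} [Field k] [IsAlgClosed k] {ℓ : ℕ}
    [Fact ℓ.Prime] (hℓ : 5 < ℓ) (hk : (ℓ : k) ≠ 0) {K S V : Type} [Group K] [Finite K] [Group S]
    [AddCommGroup V] [Module k V] (hV : finrank k V = 2) (ρ : Representation k K V) {f : K →* S}
    (hρ : ∀ x, ρ x = 1 → f x = 1) {u t : S} (hu : u ^ ℓ = 1) (hu1 : u ≠ 1)
    (ht : t * u * t⁻¹ = u ^ 4) : ¬ Function.Surjective f := by
  intro hf
  have hprime : ℓ.Prime := Fact.out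
  have hfS : Finite S := Finite.of_surjective _ hf
  let U := Subgroup.zpowers u
  let T := Subgroup.normalizer (U : Set S)
  have huT : u ∈ T := Subgroup.le_normalizer (Subgroup.mem_zpowers u)
  have htT : t ∈ T := by
    have hle : U.map (MulAut.conj t).toMonoidHom ≤ U := by
      rw [MonoidHom.map_zpowers, Subgroup.zpowers_le]
      exact ⟨4, by simpa using ht.symm⟩
    have heq := Subgroup.eq_of_le_of_card_ge hle
      (Subgroup.card_map_of_injective (MulAut.conj t).injective).ge
    rw [Subgroup.mem_normalizer_iff]
    intro h
    have := Subgroup.mem_map_iff_mem (f := (MulAut.conj t).toMonoidHom) (MulAut.conj t).injective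
      (K := U) (x := h)
    rw [heq] at this
    exact this.symm
  have hnorm : (Subgroup.zpowers (⟨u, huT⟩ : T)).Normal := by
    have h1 : Subgroup.zpowers (⟨u, huT⟩ : T) = U.subgroupOf T := by
      apply Subgroup.map_injective T.subtype_injective
      rw [MonoidHom.map_zpowers, Subgroup.subgroupOf_map_subtype,
        inf_of_le_left Subgroup.le_normalizer]
      rfl
    rw [h1]
    infer_instance
  have h := pow_fifteen_eq_one_of_conj_eq_pow_four_of_normal (by omega) hk hV
    (ρ.comp (T.comap f).subtype) (f.subgroupComap_surjective_of_surjective T hf)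
    (fun x hx => Subtype.ext (hρ x hx)) (u := ⟨u, huT⟩) (t := ⟨t, htT⟩)
    (Subtype.ext hu) (Subtype.ext ht)
  have hord : orderOf u = ℓ := orderOf_eq_prime hu hu1
  have h15 : ¬ ℓ ∣ 3 * 5 := by
    intro hd
    rcases hprime.dvd_mul.mp hd with h | h
    · exact absurd (Nat.le_of_dvd (by norm_num) h) (by omega)
    · exact absurd (Nat.le_of_dvd (by norm_num) h) (by omega)
  rcases h with h | h
  · exact h15 (hord ▸ orderOf_dvd_of_pow_eq_one (congrArg Subtype.val h))
  · exact h15 (Dvd.dvd.mul_right (hord ▸ orderOf_dvd_of_pow_eq_one (congrArg Subtype.val h)) 5)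

/-- `S` is a quotient of a finite subgroup of `G`, up to passing to a finite cover of that
subgroup. -/
def HasSection (G S : Type) [Group G] [Group S] : Prop :=
  ∃ (K : Type) (_ : Group K) (_ : Finite K) (i : K →* G) (f : K →* S),
    Function.Surjective f ∧ ∀ x, i x = 1 → f x = 1

theorem HasSection.map {G H S : Type} [Group G] [Group H] [Group S] (h : HasSection G S)
    (φ : G →* H) (hφ : Function.Injective φ) : HasSection H S := by
  obtain ⟨K, _, _, i, f, hf, hi⟩ := h
  exact ⟨K, _, ‹_›, φ.comp i, f, hf, fun x hx => hi x (hφ (hx.trans (map_one φ).symm))⟩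

theorem HasSection.ker_or {G H S : Type} [Group G] [Group H] [Group S] [IsSimpleGroup S]
    (h : HasSection G S) (φ : G →* H) : HasSection φ.ker S ∨ HasSection H S := by
  obtain ⟨K, _, _, i, f, hf, hi⟩ := h
  let N := (φ.comp i).ker
  have hN : (N.map f).Normal := Subgroup.Normal.map inferInstance f hf
  rcases hN.eq_bot_or_eq_top with hbot | htop
  · right
    refine ⟨K, _, ‹_›, φ.comp i, f, hf, fun x hx => ?_⟩
    rw [← Subgroup.mem_bot, ← hbot]
    exact ⟨x, hx, rfl⟩
  · left
    refine ⟨N, _, inferInstance, (i.comp N.subtype).codRestrict φ.ker fun x => x.2,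
      f.comp N.subtype, fun s => ?_, fun x hx => hi x (congrArg Subtype.val hx)⟩
    obtain ⟨x, hx, rfl⟩ : s ∈ N.map f := by
      rw [htop]
      trivial
    exact ⟨⟨x, hx⟩, rfl⟩

theorem HasSection.commute {G S : Type} [Group G] [Group S] (h : HasSection G S)
    (hG : ∀ a b : G, a * b = b * a) (a b : S) : a * b = b * a := by
  obtain ⟨K, _, _, i, f, hf, hi⟩ := h
  obtain ⟨x, rfl⟩ := hf a
  obtain ⟨y, rfl⟩ := hf b
  have h := hi ((y * x)⁻¹ * (x * y)) (by
    rw [map_mul, map_inv, map_mul, map_mul, hG (i x), inv_mul_cancel])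
  rw [map_mul, map_inv, inv_mul_eq_one, map_mul, map_mul] at h
  exact h.symm

theorem ZMod.mul_eq_zero_of_castHom_eq_zero {p a : ℕ} {x y : ZMod (p * a)}
    (hx : ZMod.castHom (Dvd.intro_left p rfl) (ZMod a) x = 0)
    (hy : ZMod.castHom (Dvd.intro a rfl) (ZMod p) y = 0) : x * y = 0 := by
  obtain ⟨m, rfl⟩ := ZMod.intCast_surjective x
  obtain ⟨n, rfl⟩ := ZMod.intCast_surjective y
  rw [map_intCast, ZMod.intCast_zmod_eq_zero_iff_dvd] at hx hy
  rw [← Int.cast_mul, ZMod.intCast_zmod_eq_zero_iff_dvd, mul_comm m]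
  push_cast
  exact mul_dvd_mul hy hx

theorem Matrix.GeneralLinearGroup.map_sub_one_apply_eq_zero {n R R' : Type*} [Fintype n]
    [DecidableEq n] [CommRing R] [CommRing R'] {f : R →+* R'} {x : GL n R}
    (hx : Matrix.GeneralLinearGroup.map f x = 1) (i j : n) : f ((x.1 - 1) i j) = 0 := by
  have h : f.mapMatrix x.1 = 1 := congrArg Units.val hx
  have h' : f.mapMatrix (x.1 - 1) = 0 := by rw [map_sub, h, map_one, sub_self]
  exact congrFun (congrFun h' i) j

open Matrix in
theorem HasSection.exists_prime_generalLinearGroup {n S : Type} [Fintype n] [DecidableEq n]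
    [Group S] [IsSimpleGroup S] (hS : ∃ a b : S, a * b ≠ b * a) (m : ℕ) (hm : m ≠ 0)
    (h : HasSection (GL n (ZMod m)) S) :
    ∃ p, p.Prime ∧ p ∣ m ∧ HasSection (GL n (ZMod p)) S := by
  obtain ⟨s, t, hst⟩ := hS
  induction m using induction_on_primes with
  | zero => exact absurd rfl hm
  | one =>
    refine absurd (h.commute (fun a b => ?_) s t) hst
    have : Subsingleton (ZMod 1) := inferInstanceAs (Subsingleton (Fin 1))
    exact Subsingleton.elim _ _
  | prime_mul p a hp ih =>
    have ha : a ≠ 0 := right_ne_zero_of_mul hm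
    let φ : GL n (ZMod (p * a)) →* GL n (ZMod a) :=
      GeneralLinearGroup.map (ZMod.castHom (Dvd.intro_left p rfl) (ZMod a))
    let ψ : GL n (ZMod (p * a)) →* GL n (ZMod p) :=
      GeneralLinearGroup.map (ZMod.castHom (Dvd.intro a rfl) (ZMod p))
    rcases h.ker_or φ with h | h
    · rcases h.ker_or (ψ.comp φ.ker.subtype) with h | h
      · refine absurd (h.commute (fun x y => ?_) s t) hst
        have hzero : ∀ x y : GL n (ZMod (p * a)), φ x = 1 → ψ y = 1 →
            ((x : Matrix n n (ZMod (p * a))) - 1) * ((y : Matrix n n (ZMod (p * a))) - 1) = 0 ∧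
            ((y : Matrix n n (ZMod (p * a))) - 1) * ((x : Matrix n n (ZMod (p * a))) - 1) = 0 := by
          intro x y hx hy
          have hx' := Matrix.GeneralLinearGroup.map_sub_one_apply_eq_zero hx
          have hy' := Matrix.GeneralLinearGroup.map_sub_one_apply_eq_zero hy
          constructor <;> ext i j <;> rw [mul_apply] <;> refine Finset.sum_eq_zero fun l _ => ?_
          · exact ZMod.mul_eq_zero_of_castHom_eq_zero (hx' i l) (hy' l j)
          · exact (mul_comm _ _).trans
              (ZMod.mul_eq_zero_of_castHom_eq_zero (hx' l j) (hy' i l))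
        obtain ⟨h1, h2⟩ := hzero x.1.1 y.1.1 x.1.2 y.2
        refine Subtype.ext (Subtype.ext (Units.ext ?_))
        have h3 := h1.trans h2.symm
        simp only [mul_sub, sub_mul, mul_one, one_mul] at h3
        change (x.1.1 : Matrix n n (ZMod (p * a))) * y.1.1 = y.1.1 * x.1.1
        have h4 : (x.1.1 : Matrix n n (ZMod (p * a))) * y.1.1 - y.1.1 * x.1.1 = 0 := by
          rw [← sub_eq_zero.mpr h3]
          abel
        exact sub_eq_zero.mp h4
      · exact ⟨p, hp, dvd_mul_right p a, h⟩
    · obtain ⟨q, hq, hqa, h⟩ := ih ha h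
      exact ⟨q, hq, hqa.mul_left p, h⟩

open Matrix Module in
theorem HasSection.exists_representation {p : ℕ} [Fact p.Prime] {n S : Type} [Fintype n]
    [DecidableEq n] [Group S] (h : HasSection (GL n (ZMod p)) S) :
    ∃ (K : Type) (_ : Group K) (_ : Finite K)
      (ρ : Representation (AlgebraicClosure (ZMod p)) K (n → AlgebraicClosure (ZMod p)))
      (f : K →* S), Function.Surjective f ∧ ∀ x, ρ x = 1 → f x = 1 := by
  obtain ⟨K, _, _, i, f, hf, hi⟩ := h
  let F : Matrix n n (ZMod p) →* End (AlgebraicClosure (ZMod p)) (n → AlgebraicClosure (ZMod p)) :=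
    (toLinAlgEquiv'.toMulEquiv.toMonoidHom).comp
      ((algebraMap (ZMod p) (AlgebraicClosure (ZMod p))).mapMatrix.toMonoidHom)
  have hF : Function.Injective F :=
    toLinAlgEquiv'.injective.comp
      (Matrix.map_injective (algebraMap (ZMod p) (AlgebraicClosure (ZMod p))).injective)
  refine ⟨K, _, ‹_›, F.comp ((Units.coeHom _).comp i), f, hf, fun x hx => hi x (Units.ext ?_)⟩
  exact hF (hx.trans (map_one F).symm)

section Parabolic

theorem vecMulVec_single_injective {l R : Type*} [DecidableEq l] [CommRing R] (o : l) :
    Function.Injective (vecMulVec (Pi.single o (1 : R)) : (l → R) → Matrix l l R) := by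
  intro v w h
  ext i
  simpa [vecMulVec_apply] using congrFun (congrFun h o) i

variable {l R : Type*} [Fintype l] [DecidableEq l] [CommRing R]

theorem vecMulVec_single_mul_vecMulVec_single (o : l) {v : l → R} (hv : v o = 0) (w : l → R) :
    vecMulVec (Pi.single o 1) v * vecMulVec (Pi.single o 1) w = 0 := by
  rw [vecMulVec_mul_vecMulVec]
  simp [hv]

/-- The block matrix `diag(A, (Aᵀ)⁻¹) * (1, S; 0, 1)`, where `A` is the identity plus a row `v` in
position `o`, for `v o = 0`. -/
def parabolicMatrix (o : l) (v : l → R) (S : Matrix l l R) : Matrix (l ⊕ l) (l ⊕ l) R :=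
  fromBlocks (1 + vecMulVec (Pi.single o 1) v) ((1 + vecMulVec (Pi.single o 1) v) * S)
    0 (1 - (vecMulVec (Pi.single o 1) v)ᵀ)

theorem parabolicMatrix_mul (o : l) {v w : l → R} (hv : v o = 0) (hw : w o = 0)
    (S T : Matrix l l R) : parabolicMatrix o v S * parabolicMatrix o w T =
      parabolicMatrix o (v + w) (T + (1 - vecMulVec (Pi.single o 1) w) * S *
        (1 - (vecMulVec (Pi.single o 1) w)ᵀ)) := by
  have hvw := vecMulVec_single_mul_vecMulVec_single o hv w
  have hww := vecMulVec_single_mul_vecMulVec_single o hw w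
  have hwv : (vecMulVec (Pi.single o 1) v)ᵀ * (vecMulVec (Pi.single o 1) w)ᵀ = 0 := by
    rw [← transpose_mul, vecMulVec_single_mul_vecMulVec_single o hw v, transpose_zero]
  rw [parabolicMatrix, parabolicMatrix, parabolicMatrix, fromBlocks_multiply, vecMulVec_add,
    transpose_add]
  generalize vecMulVec (Pi.single o 1) v = a at *
  generalize vecMulVec (Pi.single o 1) w = b at *
  have h1 : (1 + a) * (1 + b) = 1 + (a + b) := by
    simp only [mul_add, add_mul, hvw, mul_one, one_mul]; abel
  have h2 : (1 + (a + b)) * (1 - b) = 1 + a := by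
    simp only [mul_sub, add_mul, one_mul, mul_one, hvw, hww]; abel
  have h3 : (1 - aᵀ) * (1 - bᵀ) = 1 - (aᵀ + bᵀ) := by
    simp only [mul_sub, sub_mul, one_mul, mul_one, hwv]; abel
  rw [mul_zero, mul_zero, add_zero, add_zero, h1, zero_mul, zero_mul, zero_add, h3, mul_add,
    ← mul_assoc (1 + (a + b)), ← mul_assoc (1 + (a + b)), h2, ← mul_assoc, h1]

theorem parabolicMatrix_zero (o : l) : parabolicMatrix o (0 : l → R) 0 = 1 := by
  simp [parabolicMatrix]

theorem parabolicMatrix_mem (o : l) {v : l → R} (hv : v o = 0) {S : Matrix l l R}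
    (hS : S.IsSymm) : parabolicMatrix o v S ∈ symplecticGroup l R := by
  have hvv := vecMulVec_single_mul_vecMulVec_single o hv v
  have hvv' : (vecMulVec (Pi.single o 1) v)ᵀ * (vecMulVec (Pi.single o 1) v)ᵀ = 0 := by
    rw [← transpose_mul, hvv, transpose_zero]
  rw [parabolicMatrix, SymplecticGroup.fromBlocks_mem_iff]
  generalize vecMulVec (Pi.single o 1) v = a at *
  have h1 : (1 + aᵀ) * (1 - aᵀ) = 1 := by
    simp only [mul_sub, add_mul, one_mul, mul_one, hvv']; abel
  have h2 : (1 - a) * (1 + a) = 1 := by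
    simp only [sub_mul, mul_add, one_mul, mul_one, hvv]; abel
  refine ⟨by simp, ?_, ?_⟩
  · simp only [transpose_mul, transpose_add, transpose_sub, transpose_one, transpose_transpose,
      hS.eq]
    rw [mul_assoc, h1, ← mul_assoc, h2, mul_one, one_mul]
  · simp only [transpose_add, transpose_one, transpose_zero, zero_mul, sub_zero, h1]

/-- The matrices `parabolicMatrix o v S` with `v o = 0` and `S` symmetric. -/
def parabolicSubgroup (o : l) : Subgroup (symplecticGroup l R) where
  carrier := {x | ∃ (v : l → R) (S : Matrix l l R), v o = 0 ∧ S.IsSymm ∧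
    (x : Matrix (l ⊕ l) (l ⊕ l) R) = parabolicMatrix o v S}
  one_mem' := ⟨0, 0, rfl, transpose_zero, (parabolicMatrix_zero o).symm⟩
  mul_mem' := by
    rintro x y ⟨v, S, hv, hS, hx⟩ ⟨w, T, hw, hT, hy⟩
    refine ⟨v + w, _, by simp [hv, hw], ?_, by
      rw [Submonoid.coe_mul, hx, hy, parabolicMatrix_mul o hv hw]⟩
    simp only [IsSymm, transpose_add, transpose_mul, transpose_sub, transpose_one,
      transpose_transpose, hS.eq, hT.eq, mul_assoc]
  inv_mem' := by
    rintro x ⟨v, S, hv, hS, hx⟩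
    have hv' : (-v) o = 0 := by simp [hv]
    have hT : (-((1 - vecMulVec (Pi.single o 1) (-v)) * S *
        (1 - (vecMulVec (Pi.single o 1) (-v))ᵀ))).IsSymm := by
      simp only [IsSymm, transpose_neg, transpose_mul, transpose_sub, transpose_one,
        transpose_transpose, hS.eq, mul_assoc]
    refine ⟨-v, _, hv', hT, ?_⟩
    have h : x * ⟨_, parabolicMatrix_mem o hv' hT⟩ = 1 := by
      apply Subtype.ext
      rw [Submonoid.coe_mul, hx, parabolicMatrix_mul o hv hv', add_neg_cancel, neg_add_cancel,
        parabolicMatrix_zero, Submonoid.coe_one]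
    rw [inv_eq_of_mul_eq_one_right h]

/-- A block upper triangular matrix commuting with `J`. -/
theorem fromBlocks_commute_J {A B D : Matrix l l R}
    (h : fromBlocks A B 0 D * J l R = J l R * fromBlocks A B 0 D) : B = 0 ∧ A = D := by
  rw [J, fromBlocks_multiply, fromBlocks_multiply] at h
  obtain ⟨h1, h2, h3, h4⟩ := fromBlocks_inj.mp h
  exact ⟨by simpa using h1, by simpa using h2⟩

theorem fromBlocks_of_mem_center {x : symplecticGroup l R} (hx : x ∈ Subgroup.center _)
    {A B D : Matrix l l R} (h : (x : Matrix (l ⊕ l) (l ⊕ l) R) = fromBlocks A B 0 D) :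
    B = 0 ∧ A = D := by
  apply fromBlocks_commute_J
  rw [← h]
  exact congrArg Subtype.val (Subgroup.mem_center_iff.mp hx (SymplecticGroup.symJ l R)).symm

theorem eq_one_of_mem_parabolicSubgroup_of_mem_center (o : l) {x : symplecticGroup l R}
    (hx : x ∈ parabolicSubgroup o) (hc : x ∈ Subgroup.center (symplecticGroup l R)) : x = 1 := by
  obtain ⟨v, S, hv, hS, h⟩ := hx
  obtain ⟨hB, hA⟩ := fromBlocks_of_mem_center hc h
  have hv0 : v = 0 := by
    ext i
    rcases eq_or_ne i o with rfl | hi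
    · exact hv
    · have := congrFun (congrFun hA o) i
      simpa [vecMulVec_apply, hi, hi.symm, one_apply] using this
  subst hv0
  have hS0 : S = 0 := by simpa using hB
  subst hS0
  exact Subtype.ext (h.trans (parabolicMatrix_zero o))

theorem isPGroup_parabolicSubgroup {ℓ : ℕ} [Fact ℓ.Prime] [CharP R ℓ] (hℓ : 4 ≤ ℓ) (o : l) :
    IsPGroup ℓ (parabolicSubgroup (R := R) o) := by
  have : Nonempty l := ⟨o⟩
  rintro ⟨x, v, S, hv, hS, h⟩
  refine ⟨1, Subtype.ext (Subtype.ext ?_)⟩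
  have hvv := vecMulVec_single_mul_vecMulVec_single o hv v
  have hvv' : (vecMulVec (Pi.single o 1) v)ᵀ * (vecMulVec (Pi.single o 1) v)ᵀ = 0 := by
    rw [← transpose_mul, hvv, transpose_zero]
  rw [parabolicMatrix] at h
  generalize vecMulVec (Pi.single o 1) v = a at *
  have h1 : fromBlocks (1 + a) ((1 + a) * S) 0 (1 - aᵀ) =
      1 + fromBlocks a ((1 + a) * S) 0 (-aᵀ) := by
    rw [← fromBlocks_one, fromBlocks_add]
    simp [sub_eq_add_neg]
  have h4 : (fromBlocks a ((1 + a) * S) 0 (-aᵀ)) ^ 4 = 0 := by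
    rw [show 4 = 2 * 2 from rfl, pow_mul, sq, sq, fromBlocks_multiply, fromBlocks_multiply]
    simp [hvv, hvv']
  have hmat : (x : Matrix (l ⊕ l) (l ⊕ l) R) ^ ℓ = 1 := by
    rw [h, h1, add_pow_char_of_commute ℓ (Commute.one_left _), one_pow,
      pow_eq_zero_of_le hℓ h4, add_zero]
  rw [pow_one]
  exact hmat

/-- Commuting with a symmetric unipotent block matrix. -/
theorem mulVec_eq_zero_of_commute_parabolicMatrix [IsDomain R] (h2 : (2 : R) ≠ 0) (o : l)
    {v : l → R} (hv : v o = 0) {S T : Matrix l l R} (hT : T.IsSymm)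
    (h : parabolicMatrix o v S * parabolicMatrix o 0 T =
      parabolicMatrix o 0 T * parabolicMatrix o v S) : T *ᵥ v = 0 := by
  rw [parabolicMatrix_mul o hv rfl, parabolicMatrix_mul o rfl hv, add_zero, zero_add] at h
  have h1 := (fromBlocks_inj.mp h).2.1
  have hvv := vecMulVec_single_mul_vecMulVec_single o hv v
  have h3 : vecMulVec (Pi.single o 1) v * T = -(T * (vecMulVec (Pi.single o 1) v)ᵀ) := by
    simp only [vecMulVec_zero, transpose_zero, sub_zero, one_mul, mul_one] at h1
    generalize vecMulVec (Pi.single o 1) v = a at *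
    have h4 : (1 + a) * (1 - a) = 1 := by
      simp only [mul_sub, add_mul, one_mul, mul_one, hvv]; abel
    rw [mul_add, mul_add, add_comm, add_right_inj, ← mul_assoc, ← mul_assoc, h4, one_mul, add_mul,
      mul_sub, one_mul, mul_one, sub_eq_add_neg, add_right_inj] at h1
    exact h1
  rw [transpose_vecMulVec, mul_vecMulVec, vecMulVec_mul, ← mulVec_transpose, hT.eq] at h3
  ext i
  have h5 := congrFun (congrFun h3 i) o
  rw [neg_apply, vecMulVec_apply, vecMulVec_apply] at h5
  rcases eq_or_ne i o with rfl | hi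
  · rw [Pi.single_eq_same, one_mul, mul_one, eq_neg_iff_add_eq_zero, ← two_mul] at h5
    exact (mul_eq_zero.mp h5).resolve_left h2
  · rw [Pi.single_eq_of_ne hi, Pi.single_eq_same, zero_mul, mul_one, eq_comm, neg_eq_zero] at h5
    exact h5

end Parabolic

section Parabolic

variable {l R : Type} [DecidableEq l] [CommRing R]

/-- The vector with prescribed entries away from `o`, and entry zero at `o`. -/
def extendZero (o : l) (w : {i // i ≠ o} → R) (i : l) : R :=
  if h : i ≠ o then w ⟨i, h⟩ else 0

theorem extendZero_self (o : l) (w : {i // i ≠ o} → R) : extendZero o w o = 0 := by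
  simp [extendZero]

theorem extendZero_injective (o : l) :
    Function.Injective (extendZero o : ({i // i ≠ o} → R) → l → R) := by
  intro w w' h
  ext ⟨i, hi⟩
  simpa [extendZero, hi] using congrFun h i

variable [Fintype l]

theorem eq_of_parabolicMatrix_eq (o : l) {v w : l → R} {S T : Matrix l l R}
    (h : parabolicMatrix o v S = parabolicMatrix o w T) : v = w :=
  vecMulVec_single_injective o (add_right_injective 1 (fromBlocks_inj.mp h).1)

/-- The element `parabolicMatrix o v S` of `parabolicSubgroup o`. -/
def parabolicElement (o : l) (v : l → R) (S : Matrix l l R) (hv : v o = 0) (hS : S.IsSymm) :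
    parabolicSubgroup (R := R) o :=
  ⟨⟨parabolicMatrix o v S, parabolicMatrix_mem o hv hS⟩, v, S, hv, hS, rfl⟩

theorem exists_eq_parabolicElement (o : l) (x : parabolicSubgroup (R := R) o) :
    ∃ v S hv hS, x = parabolicElement o v S hv hS := by
  obtain ⟨x, v, S, hv, hS, h⟩ := x
  exact ⟨v, S, hv, hS, Subtype.ext (Subtype.ext h)⟩

theorem parabolicElement_mul (o : l) {v w : l → R} {S T : Matrix l l R} (hv : v o = 0)
    (hS : S.IsSymm) (hw : w o = 0) (hT : T.IsSymm) :
    ((parabolicElement o v S hv hS * parabolicElement o w T hw hT : parabolicSubgroup (R := R) o) :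
      symplecticGroup l R).1 = parabolicMatrix o (v + w)
        (T + (1 - vecMulVec (Pi.single o 1) w) * S * (1 - (vecMulVec (Pi.single o 1) w)ᵀ)) :=
  parabolicMatrix_mul o hv hw S T

theorem card_pow_le_index_of_injective [Finite R] (o p : l)
    {B : Subgroup (parabolicSubgroup (R := R) o)}
    (e : ({i // i ≠ p} → R) → parabolicSubgroup (R := R) o)
    (he : ∀ w w', ∀ b ∈ B, e w' = e w * b → w = w') :
    Nat.card R ^ (Fintype.card l - 1) ≤ B.index := by
  have h := Nat.card_le_card_of_injective (fun w => (e w : parabolicSubgroup (R := R) o ⧸ B))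
    fun w w' hw => he w w' _ (QuotientGroup.eq.mp hw) (by group)
  rwa [Nat.card_fun, Nat.card_eq_fintype_card (α := {i // i ≠ p}), Fintype.card_subtype_compl,
    Fintype.card_subtype_eq] at h

/-- A commutative subgroup of `parabolicSubgroup o` has large index. -/
theorem card_pow_le_index_of_commutative [Finite R] [IsDomain R] (h2 : (2 : R) ≠ 0) (o : l)
    {B : Subgroup (parabolicSubgroup (R := R) o)} (hB : ∀ a ∈ B, ∀ b ∈ B, a * b = b * a) :
    Nat.card R ^ (Fintype.card l - 1) ≤ B.index := by
  by_cases hB0 : ∀ v S hv hS, parabolicElement o v S hv hS ∈ B → v = 0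
  · refine card_pow_le_index_of_injective o o (fun w => parabolicElement o (extendZero o w) 0
      (extendZero_self o w) transpose_zero) fun w w' b hb h => ?_
    obtain ⟨v, S, hv, hS, rfl⟩ := exists_eq_parabolicElement o b
    obtain rfl := hB0 v S hv hS hb
    have h1 := (congrArg (fun x => x.1.1) h).trans (parabolicElement_mul o _ _ hv hS)
    rw [add_zero] at h1
    exact extendZero_injective o (eq_of_parabolicMatrix_eq o h1).symm
  · push Not at hB0
    obtain ⟨v, S, hv, hS, hb, hv0⟩ := hB0
    obtain ⟨j, hj⟩ := Function.ne_iff.mp hv0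
    have hT : ∀ w : l → R, (vecMulVec w (Pi.single j 1) + vecMulVec (Pi.single j 1) w).IsSymm :=
      fun w => by simp only [IsSymm, transpose_add, transpose_vecMulVec, add_comm]
    refine card_pow_le_index_of_injective o j (fun w => parabolicElement o 0 _ rfl
      (hT (extendZero j w))) fun w w' b hbB h => ?_
    obtain ⟨u, U, hu, hU, rfl⟩ := exists_eq_parabolicElement o b
    have h1 := (congrArg (fun x => x.1.1) h).trans (parabolicElement_mul o _ _ hu hU)
    rw [zero_add] at h1
    obtain rfl := eq_of_parabolicMatrix_eq o h1
    have h3 := mulVec_eq_zero_of_commute_parabolicMatrix h2 o hv hU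
      (congrArg (fun x => x.1.1) (hB _ hb _ hbB))
    have h4 := (fromBlocks_inj.mp h1).2.1
    simp only [vecMulVec_zero, add_zero, one_mul, transpose_zero, sub_zero, mul_one] at h4
    have h5 := congrArg (fun X => X *ᵥ v) h4
    simp only [add_mulVec, h3, zero_add, vecMulVec_mulVec] at h5
    ext ⟨i, hi⟩
    have h6 := congrFun h5 i
    simp [hi, extendZero] at h6
    exact (h6.resolve_right hj).symm

end Parabolic

theorem mul_comm_of_mul_comm_map_mk_center {G : Type*} [Group G] {H : Subgroup G}
    (hH : ∀ x ∈ H, x ∈ Subgroup.center G → x = 1) {a b : G} (ha : a ∈ H) (hb : b ∈ H)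
    (h : (a * b : G ⧸ Subgroup.center G) = b * a) : a * b = b * a := by
  have h1 : ((b * a : G) : G ⧸ Subgroup.center G) = (a * b : G) := h.symm
  have h2 := hH _ (H.mul_mem (H.inv_mem (H.mul_mem hb ha)) (H.mul_mem ha hb))
    (QuotientGroup.eq.mp h1)
  exact (inv_mul_eq_one.mp h2).symm

theorem card_pow_le_index_of_commutative_map {ℓ : ℕ} [Fact ℓ.Prime] (hℓ : ℓ ≠ 2) {g : ℕ}
    (o : Fin g) {B : Subgroup ((parabolicSubgroup (R := ZMod ℓ) o).map
      (QuotientGroup.mk' (Subgroup.center (symplecticGroup (Fin g) (ZMod ℓ)))))}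
    (hB : ∀ a ∈ B, ∀ b ∈ B, a * b = b * a) : ℓ ^ (g - 1) ≤ B.index := by
  have h2 : (2 : ZMod ℓ) ≠ 0 := Ring.two_ne_zero (by rwa [ringChar.eq (ZMod ℓ) ℓ])
  set q := (QuotientGroup.mk' (Subgroup.center (symplecticGroup (Fin g) (ZMod ℓ)))).subgroupMap
    (parabolicSubgroup (R := ZMod ℓ) o)
  rw [← Subgroup.index_comap_of_surjective B (f := q) (MonoidHom.subgroupMap_surjective _ _)]
  have := card_pow_le_index_of_commutative h2 o (B := B.comap q) fun a ha b hb => by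
    refine Subtype.ext (mul_comm_of_mul_comm_map_mk_center
      (fun x => eq_one_of_mem_parabolicSubgroup_of_mem_center o) a.2 b.2 ?_)
    exact congrArg Subtype.val (hB _ ha _ hb)
  rwa [Nat.card_zmod, Fintype.card_fin] at this

theorem not_surjective_PSp_of_two_le {k : Type} [Field k] [IsAlgClosed k] {g ℓ : ℕ}
    [Fact ℓ.Prime] (hℓ : 5 < ℓ) (hg : 2 ≤ g) (hk : (ℓ : k) ≠ 0) {K V : Type} [Group K] [Finite K]
    [AddCommGroup V] [Module k V] (hV : Module.finrank k V = 2 * g) (ρ : Representation k K V)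
    {f : K →* PSp g ℓ} (hρ : ∀ x, ρ x = 1 → f x = 1) : ¬ Function.Surjective f := by
  intro hf
  let o : Fin g := ⟨0, by omega⟩
  obtain ⟨B, hB, hle⟩ := exists_commutative_subgroup_of_surjective hk (by omega) ρ hf hρ
    ((isPGroup_parabolicSubgroup (R := ZMod ℓ) (by omega) o).map
      (QuotientGroup.mk' (Subgroup.center (symplecticGroup (Fin g) (ZMod ℓ)))))
  have h1 := card_pow_le_index_of_commutative_map (by omega) o hB
  have h2 : ℓ ^ ((g - 1) * (ℓ - 1) + 1) ≤ ℓ ^ (2 * g) := by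
    rw [pow_succ, pow_mul, ← hV]
    exact le_trans (by gcongr) hle
  have h3 := (Nat.pow_le_pow_iff_right (by omega)).mp h2
  have h4 : (g - 1) * 5 ≤ (g - 1) * (ℓ - 1) := by gcongr; omega
  omega

theorem fromBlocks_one_pow {l R : Type*} [Fintype l] [DecidableEq l] [CommRing R]
    (A : Matrix l l R) (n : ℕ) :
    fromBlocks (1 : Matrix l l R) A 0 (1 : Matrix l l R) ^ n =
      fromBlocks (1 : Matrix l l R) (n • A) 0 (1 : Matrix l l R) := by
  induction n with
  | zero => simp
  | succ n ih =>
    rw [pow_succ, ih, fromBlocks_multiply]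
    simp [add_smul, add_comm]

theorem not_surjective_PSp_one {k : Type} [Field k] [IsAlgClosed k] {ℓ : ℕ}
    [Fact ℓ.Prime] (hℓ : 5 < ℓ) (hk : (ℓ : k) ≠ 0) {K V : Type} [Group K] [Finite K]
    [AddCommGroup V] [Module k V] (hV : Module.finrank k V = 2) (ρ : Representation k K V)
    {f : K →* PSp 1 ℓ} (hρ : ∀ x, ρ x = 1 → f x = 1) : ¬ Function.Surjective f := by
  have h2 : (2 : ZMod ℓ) ≠ 0 := Ring.two_ne_zero (by rw [ringChar.eq (ZMod ℓ) ℓ]; omega)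
  let u : symplecticGroup (Fin 1) (ZMod ℓ) := ⟨fromBlocks 1 1 0 1, by
    simp [SymplecticGroup.fromBlocks_mem_iff]⟩
  let t : symplecticGroup (Fin 1) (ZMod ℓ) :=
    ⟨fromBlocks ((2 : ZMod ℓ) • 1) 0 0 ((2 : ZMod ℓ)⁻¹ • 1), by
      simp [SymplecticGroup.fromBlocks_mem_iff, smul_smul, h2]⟩
  have hu : u ^ ℓ = 1 := by
    apply Subtype.ext
    rw [SubmonoidClass.coe_pow, fromBlocks_one_pow, ← Nat.cast_smul_eq_nsmul (ZMod ℓ)]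
    simp
  have htu : t * u = u ^ 4 * t := by
    apply Subtype.ext
    rw [Submonoid.coe_mul, Submonoid.coe_mul, SubmonoidClass.coe_pow, fromBlocks_one_pow,
      fromBlocks_multiply, fromBlocks_multiply, ← Nat.cast_smul_eq_nsmul (ZMod ℓ)]
    have : (2 : ZMod ℓ)⁻¹ * 4 = 2 := by field_simp; norm_num
    simp [smul_smul, this]
  have hu1 : u ∉ Subgroup.center (symplecticGroup (Fin 1) (ZMod ℓ)) := fun h =>
    one_ne_zero (fromBlocks_of_mem_center h rfl).1
  refine not_surjective_of_conj_eq_pow_four hℓ hk hV ρ hρ (u := (u : PSp 1 ℓ)) (t := (t : PSp 1 ℓ))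
    ?_ ?_ ?_
  · exact congrArg (QuotientGroup.mk (s := Subgroup.center _)) hu
  · exact fun h => hu1 ((QuotientGroup.eq_one_iff _).mp h)
  · rw [mul_inv_eq_iff_eq_mul]
    exact congrArg (QuotientGroup.mk (s := Subgroup.center _)) htu

theorem MemOcc.hasSection {G S : Type} [Group G] [Finite G] [Group S] (h : MemOcc G S) :
    HasSection G S := by
  obtain ⟨-, -, K, f, hf⟩ := h
  exact ⟨K, _, inferInstance, K.subtype, f, hf, fun x hx => by
    rw [show x = 1 from Subtype.ext hx, map_one]⟩

/-- For a prime `ℓ > 5` not dividing `m`,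
`PSp_{2g}(ℤ/ℓℤ) ∉ Occ(GSp_{2g}(ℤ/mℤ))`. -/
theorem stmt_10 (g m ℓ : ℕ) (hg : 1 ≤ g) (hm : 0 < m) (hℓ : ℓ.Prime) (h5 : 5 < ℓ)
    (hndvd : ¬ ℓ ∣ m) :
    ¬ MemOcc ↥(GSp g m) (PSp g ℓ) := by
  intro h
  have : Fact ℓ.Prime := ⟨hℓ⟩
  have : NeZero m := ⟨hm.ne'⟩
  have : Finite (GL (Fin g ⊕ Fin g) (ZMod m)) := inferInstance
  have : IsSimpleGroup (PSp g ℓ) := h.1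
  obtain ⟨p, hp, hpm, hs⟩ := HasSection.exists_prime_generalLinearGroup h.2.1 m hm.ne'
    (h.hasSection.map (GSp g m).subtype (GSp g m).subtype_injective)
  have : Fact p.Prime := ⟨hp⟩
  obtain ⟨K, _, _, ρ, f, hf, hρ⟩ := hs.exists_representation
  have hk : (ℓ : AlgebraicClosure (ZMod p)) ≠ 0 := fun h0 =>
    hndvd ((Nat.prime_dvd_prime_iff_eq hp hℓ).mp ((CharP.cast_eq_zero_iff _ p ℓ).mp h0) ▸ hpm)
  have hV : Module.finrank (AlgebraicClosure (ZMod p))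
      (Fin g ⊕ Fin g → AlgebraicClosure (ZMod p)) = 2 * g := by
    simp [two_mul]
  rcases hg.eq_or_lt with rfl | hg
  · exact not_surjective_PSp_one h5 hk hV ρ hρ hf
  · exact not_surjective_PSp_of_two_le h5 hg hk hV ρ hρ hf
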